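/- arXiv:2602.10857 — 8 statements merged into one kernel-verified Lean document; each statement's English description precedes it below -/
import Mathlib

section
/- Fix q ≥ 0 with q ≠ 1. The stationary distribution corresponding to a rate function u in the PALRMP is factorised if and only if there exists φ : ℕ → ℝ_{>0} such that u(m,n) = φ(n) for all m ≥ 1, n ≥ 0 (and u(0,n) = 0). In that case the one-point function f(x,n) = x^n ∏_{i=1}^{n} φ(i−1) works. -/
open scoped Classical

namespace LRMP

/-- A rate function: `u m n` is positive when the departure site is occupied
(`m ≥ 1`) and zero when it is empty (`m = 0`). -/
def IsRate (u : ℕ → ℕ → ℝ) : Prop :=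
  (∀ m n : ℕ, 1 ≤ m → 0 < u m n) ∧ ∀ n : ℕ, u 0 n = 0

/-- The configuration `η^{k,ℓ}`: one particle moved from site `k` to site `ℓ`. -/
def move (L : ℕ) (η : ZMod L → ℕ) (k ℓ : ZMod L) : ZMod L → ℕ :=
  fun a => if a = k then η a - 1 else if a = ℓ then η a + 1 else η a

/-- Every site strictly between `k` and `ℓ`, moving clockwise from `k`, is empty in `η`. -/
def RightClear (L : ℕ) (η : ZMod L → ℕ) (k ℓ : ZMod L) : Prop :=
  ∀ i : ℕ, 0 < i → i < (ℓ - k).val → η (k + (i : ZMod L)) = 0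

/-- Every site strictly between `k` and `ℓ`, moving counterclockwise from `k`, is empty in `η`. -/
def LeftClear (L : ℕ) (η : ZMod L → ℕ) (k ℓ : ZMod L) : Prop :=
  ∀ i : ℕ, 0 < i → i < (k - ℓ).val → η (k - (i : ZMod L)) = 0

/-- The total rate of the transition `η → η^{k,ℓ}` in the PALRMP with rate function `u`,
rate parameters `x` and asymmetry parameter `q`: a clockwise (right) hop contributes
`x ℓ * u (η k) (η ℓ)` and a counterclockwise (left) hop contributes `q * x ℓ * u (η k) (η ℓ)`. -/
noncomputable def hopRate (L : ℕ) (u : ℕ → ℕ → ℝ) (x : ZMod L → ℝ) (q : ℝ)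
    (η : ZMod L → ℕ) (k ℓ : ZMod L) : ℝ :=
  (if k ≠ ℓ ∧ 1 ≤ η k ∧ RightClear L η k ℓ then x ℓ * u (η k) (η ℓ) else 0) +
  (if k ≠ ℓ ∧ 1 ≤ η k ∧ LeftClear L η k ℓ then q * (x ℓ * u (η k) (η ℓ)) else 0)

/-- The incoming probability current into `η`: the sum over pairs `(k, ℓ)` of the
probability current due to the transition into `η` in which a particle moves from
site `k` to site `ℓ` (coming from the configuration `η^{ℓ,k} = move L η ℓ k`). -/
noncomputable def inflow (L : ℕ) [NeZero L] (u : ℕ → ℕ → ℝ) (x : ZMod L → ℝ) (q : ℝ)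
    (π : (ZMod L → ℕ) → ℝ) (η : ZMod L → ℕ) : ℝ :=
  ∑ k : ZMod L, ∑ ℓ : ZMod L,
    if 1 ≤ η ℓ then π (move L η ℓ k) * hopRate L u x q (move L η ℓ k) k ℓ else 0

/-- The outgoing probability current out of `η`. -/
noncomputable def outflow (L : ℕ) [NeZero L] (u : ℕ → ℕ → ℝ) (x : ZMod L → ℝ) (q : ℝ)
    (π : (ZMod L → ℕ) → ℝ) (η : ZMod L → ℕ) : ℝ :=
  ∑ k : ZMod L, ∑ ℓ : ZMod L, π η * hopRate L u x q η k ℓ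

/-- `π` satisfies the master (balance) equation of the PALRMP on `Ω_{L,N}`:
for every configuration `η` with `N` particles, the incoming probability current
equals the outgoing probability current. -/
def IsStationary (L : ℕ) [NeZero L] (N : ℕ) (u : ℕ → ℕ → ℝ) (x : ZMod L → ℝ) (q : ℝ)
    (π : (ZMod L → ℕ) → ℝ) : Prop :=
  ∀ η : ZMod L → ℕ, (∑ a, η a) = N → inflow L u x q π η = outflow L u x q π η

/-- The stationary distribution corresponding to the rate `u` in the PALRMP with
asymmetry parameter `q` is factorised, with one-point function `f`: for every
`L ≥ 2`, `N ≥ 1` and all positive rate parameters `x`, the factorised distribution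
`η ↦ ∏_ℓ f (x ℓ) (η ℓ)` (up to normalisation) is stationary. -/
def FactorisedPALRMP (u : ℕ → ℕ → ℝ) (q : ℝ) (f : ℝ → ℕ → ℝ) : Prop :=
  (∀ (x : ℝ) (n : ℕ), 0 < x → 0 < f x n) ∧
  ∀ (L N : ℕ) [NeZero L], 2 ≤ L → 1 ≤ N →
    ∀ x : ZMod L → ℝ, (∀ ℓ, 0 < x ℓ) →
      IsStationary L N u x q (fun η => ∏ ℓ, f (x ℓ) (η ℓ))

/-- The stationary distribution corresponding to the rate `u` in the homogeneous
PALRMP (all rate parameters equal to `1`) with asymmetry parameter `q` is factorised,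
with one-point function `f`. -/
def FactorisedHomog (u : ℕ → ℕ → ℝ) (q : ℝ) (f : ℕ → ℝ) : Prop :=
  (∀ n : ℕ, 0 < f n) ∧
  ∀ (L N : ℕ) [NeZero L], 2 ≤ L → 1 ≤ N →
    IsStationary L N u (fun _ => (1 : ℝ)) q (fun η => ∏ ℓ, f (η ℓ))

end LRMP

namespace LRMP

lemma rightClear_iff (L : ℕ) [NeZero L] (η : ZMod L → ℕ) (k ℓ : ZMod L) :
    RightClear L η k ℓ ↔ ∀ j, j ≠ k → (j - k).val < (ℓ - k).val → η j = 0 := by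
  constructor
  · intro h j hj hlt
    have := h (j - k).val (by
      rw [Nat.pos_iff_ne_zero, Ne, ZMod.val_eq_zero]; exact sub_ne_zero.2 hj) hlt
    simpa using this
  · intro h i hi hlt
    have hiL : i < L := hlt.trans (ZMod.val_lt _)
    have hv : ((i : ZMod L)).val = i := ZMod.val_natCast_of_lt hiL
    apply h
    · intro h0
      have : (i : ZMod L) = 0 := by simpa using h0
      rw [this] at hv; simp at hv; omega
    · simpa [hv] using hlt

lemma leftClear_iff (L : ℕ) [NeZero L] (η : ZMod L → ℕ) (k ℓ : ZMod L) :
    LeftClear L η k ℓ ↔ ∀ j, j ≠ k → (k - j).val < (k - ℓ).val → η j = 0 := by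
  constructor
  · intro h j hj hlt
    have := h (k - j).val (by
      rw [Nat.pos_iff_ne_zero, Ne, ZMod.val_eq_zero]; exact sub_ne_zero.2 hj.symm) hlt
    simpa using this
  · intro h i hi hlt
    have hiL : i < L := hlt.trans (ZMod.val_lt _)
    have hv : ((i : ZMod L)).val = i := ZMod.val_natCast_of_lt hiL
    apply h
    · intro h0
      have : (i : ZMod L) = 0 := by simpa using h0
      rw [this] at hv; simp at hv; omega
    · simpa [hv] using hlt

lemma left_of_right (L : ℕ) [NeZero L] (η : ZMod L → ℕ) (k ℓ : ZMod L)
    (h : RightClear L η ℓ k) : LeftClear L η k ℓ := by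
  intro i hi hlt
  have := h ((k - ℓ).val - i) (by omega) (by omega)
  rw [Nat.cast_sub hlt.le, ZMod.natCast_zmod_val] at this
  rwa [show ℓ + (k - ℓ - (i : ZMod L)) = k - i by ring] at this

lemma right_of_left (L : ℕ) [NeZero L] (η : ZMod L → ℕ) (k ℓ : ZMod L)
    (h : LeftClear L η ℓ k) : RightClear L η k ℓ := by
  intro i hi hlt
  have := h ((ℓ - k).val - i) (by omega) (by omega)
  rw [Nat.cast_sub hlt.le, ZMod.natCast_zmod_val] at this
  rwa [show ℓ - (ℓ - k - (i : ZMod L)) = k + i by ring] at this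

lemma right_iff_left (L : ℕ) [NeZero L] (η : ZMod L → ℕ) (k ℓ : ZMod L) :
    RightClear L η ℓ k ↔ LeftClear L η k ℓ :=
  ⟨left_of_right L η k ℓ, right_of_left L η ℓ k⟩

lemma rightClear_move (L : ℕ) [NeZero L] (η : ZMod L → ℕ) (k ℓ : ZMod L) :
    RightClear L (move L η ℓ k) k ℓ ↔ RightClear L η k ℓ := by
  rw [rightClear_iff, rightClear_iff]
  refine forall_congr' fun j => forall_congr' fun hj => forall_congr' fun hlt => ?_
  have : j ≠ ℓ := by rintro rfl; exact lt_irrefl _ hlt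
  simp [move, hj, this]

lemma leftClear_move (L : ℕ) [NeZero L] (η : ZMod L → ℕ) (k ℓ : ZMod L) :
    LeftClear L (move L η ℓ k) k ℓ ↔ LeftClear L η k ℓ := by
  rw [leftClear_iff, leftClear_iff]
  refine forall_congr' fun j => forall_congr' fun hj => forall_congr' fun hlt => ?_
  have : j ≠ ℓ := by rintro rfl; exact lt_irrefl _ hlt
  simp [move, hj, this]

/-- Detailed balance for a pair of sites. -/
def DB (u : ℕ → ℕ → ℝ) (f : ℝ → ℕ → ℝ) : Prop :=
  ∀ x y : ℝ, 0 < x → 0 < y → ∀ m n : ℕ,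
    f x (m+1) * f y n * (y * u (m+1) n) = f x m * f y (n+1) * (x * u (n+1) m)

lemma prod_pair (L : ℕ) [NeZero L] (F : ZMod L → ℝ) (k ℓ : ZMod L) (h : k ≠ ℓ) :
    ∏ a, F a = F k * F ℓ * ∏ a ∈ (Finset.univ.erase k).erase ℓ, F a := by
  rw [mul_assoc, Finset.mul_prod_erase _ _ (by simp [h.symm]), Finset.mul_prod_erase _ _ (by simp)]

lemma prod_move (L : ℕ) [NeZero L] (u : ℕ → ℕ → ℝ) (f : ℝ → ℕ → ℝ) (hdb : DB u f)
    (x : ZMod L → ℝ) (hx : ∀ ℓ, 0 < x ℓ) (η : ZMod L → ℕ) (k ℓ : ZMod L) (h : k ≠ ℓ)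
    (hl : 1 ≤ η ℓ) :
    (∏ a, f (x a) (move L η ℓ k a)) * (x ℓ * u (move L η ℓ k k) (move L η ℓ k ℓ)) =
    (∏ a, f (x a) (η a)) * (x k * u (η ℓ) (η k)) := by
  rw [prod_pair L _ k ℓ h, prod_pair L (fun a => f (x a) (η a)) k ℓ h]
  have hr : ∏ a ∈ (Finset.univ.erase k).erase ℓ, f (x a) (move L η ℓ k a) =
      ∏ a ∈ (Finset.univ.erase k).erase ℓ, f (x a) (η a) := by
    refine Finset.prod_congr rfl fun a ha => ?_
    simp only [Finset.mem_erase] at ha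
    simp [move, ha.1, ha.2.1]
  rw [hr]
  have h1 : move L η ℓ k k = η k + 1 := by simp [move, h]
  have h2 : move L η ℓ k ℓ = η ℓ - 1 := by simp [move]
  rw [h1, h2]
  obtain ⟨n, hn⟩ : ∃ n, η ℓ = n + 1 := ⟨η ℓ - 1, by omega⟩
  rw [hn]
  have := hdb (x k) (x ℓ) (hx k) (hx ℓ) (η k) n
  simp only [Nat.add_sub_cancel]
  linear_combination (∏ a ∈ (Finset.univ.erase k).erase ℓ, f (x a) (η a)) * this

/-- weight of clockwise neighbours -/
noncomputable def RW (L : ℕ) [NeZero L] (u : ℕ → ℕ → ℝ) (η : ZMod L → ℕ) (k : ZMod L) : ℝ :=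
  ∑ ℓ, if k ≠ ℓ ∧ 1 ≤ η ℓ ∧ RightClear L η k ℓ then u (η ℓ) (η k) else 0

/-- weight of counterclockwise neighbours -/
noncomputable def LW (L : ℕ) [NeZero L] (u : ℕ → ℕ → ℝ) (η : ZMod L → ℕ) (k : ZMod L) : ℝ :=
  ∑ ℓ, if k ≠ ℓ ∧ 1 ≤ η ℓ ∧ LeftClear L η k ℓ then u (η ℓ) (η k) else 0

lemma flow_diff (L : ℕ) [NeZero L] (u : ℕ → ℕ → ℝ) (f : ℝ → ℕ → ℝ) (hdb : DB u f) (q : ℝ)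
    (x : ZMod L → ℝ) (hx : ∀ ℓ, 0 < x ℓ) (η : ZMod L → ℕ) :
    inflow L u x q (fun η => ∏ ℓ, f (x ℓ) (η ℓ)) η - outflow L u x q (fun η => ∏ ℓ, f (x ℓ) (η ℓ)) η
     = (∏ ℓ, f (x ℓ) (η ℓ)) * (1 - q) * ∑ k, x k * (RW L u η k - LW L u η k) := by
  unfold inflow outflow
  rw [Finset.sum_comm (f := fun k ℓ => (∏ ℓ, f (x ℓ) (η ℓ)) * hopRate L u x q η k ℓ),
    ← Finset.sum_sub_distrib, Finset.mul_sum]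
  refine Finset.sum_congr rfl fun k _ => ?_
  unfold RW LW
  rw [← Finset.sum_sub_distrib, ← Finset.sum_sub_distrib, Finset.mul_sum, Finset.mul_sum]
  refine Finset.sum_congr rfl fun ℓ _ => ?_
  unfold hopRate
  rw [rightClear_move, leftClear_move, right_iff_left L η k ℓ, ← right_iff_left L η ℓ k]
  by_cases hk : k = ℓ
  · subst hk; simp
  by_cases hl : 1 ≤ η ℓ
  · have hp := prod_move L u f hdb x hx η k ℓ hk hl
    have h1 : 1 ≤ move L η ℓ k k := by simp [move, hk]
    have hk' : ℓ ≠ k := fun h => hk h.symm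
    simp only [ne_eq, hk, hk', hl, h1, not_false_eq_true, true_and, if_true]
    by_cases hR : RightClear L η k ℓ <;> by_cases hL : LeftClear L η k ℓ <;>
      simp only [hR, hL, if_true, if_false]
    · linear_combination (1 + q) * hp
    · linear_combination hp
    · linear_combination q * hp
    · ring
  · simp [hl]

lemma sum_two (F : ZMod 2 → ℝ) : ∑ k, F k = F 0 + F 1 := Fin.sum_univ_two F
lemma prod_two (F : ZMod 2 → ℝ) : ∏ k, F k = F 0 * F 1 := Fin.prod_univ_two F
lemma sum_three (F : ZMod 3 → ℝ) : ∑ k, F k = F 0 + F 1 + F 2 := Fin.sum_univ_three F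

lemma right_two (η : ZMod 2 → ℕ) (k ℓ : ZMod 2) : RightClear 2 η k ℓ := by
  intro i hi h
  have := ZMod.val_lt (ℓ - k)
  omega

lemma left_two (η : ZMod 2 → ℕ) (k ℓ : ZMod 2) : LeftClear 2 η k ℓ := by
  intro i hi h
  have := ZMod.val_lt (k - ℓ)
  omega

/-- current across a bond -/
noncomputable def J (u : ℕ → ℕ → ℝ) (f : ℝ → ℕ → ℝ) (x y : ℝ) (a b : ℕ) : ℝ :=
  f x (a+1) * f y b * (y * u (a+1) b) - f x a * f y (b+1) * (x * u (b+1) a)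

lemma two_site (q : ℝ) (hq : 0 ≤ q) (u : ℕ → ℕ → ℝ) (f : ℝ → ℕ → ℝ)
    (h : FactorisedPALRMP u q f) (x y : ℝ) (hx : 0 < x) (hy : 0 < y) (a b : ℕ) (hab : 1 ≤ a + b) :
    (if 1 ≤ b then J u f x y a (b-1) else 0) = (if 1 ≤ a then J u f x y (a-1) b else 0) := by
  have h2 := h.2 2 (∑ k : ZMod 2, (if k = 0 then a else b)) le_rfl
    (by
      have : ∑ k : ZMod 2, (if k = 0 then a else b) = a + b := Fin.sum_univ_two _
      omega) (fun k => if k = 0 then x else y) (by intro k; split_ifs <;> assumption)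
    (fun k => if k = 0 then a else b) rfl
  have h10 : (1 : ZMod 2) ≠ 0 := by decide
  simp only [inflow, outflow, sum_two, prod_two, hopRate, right_two, left_two, move, h10, h10.symm,
    ne_eq, not_true_eq_false, not_false_eq_true, if_true, if_false, true_and, false_and, and_true,
    le_add_iff_nonneg_left, zero_le] at h2
  have hq' : (1 + q) ≠ 0 := by positivity
  apply mul_left_cancel₀ hq'
  unfold J
  rcases a with _ | a <;> rcases b with _ | b <;>
    simp [-mul_eq_zero, -zero_eq_mul, -mul_eq_mul_left_iff] at h2 hab ⊢ <;> linear_combination h2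

lemma db_of (q : ℝ) (hq : 0 ≤ q) (u : ℕ → ℕ → ℝ) (f : ℝ → ℕ → ℝ)
    (h : FactorisedPALRMP u q f) : DB u f := by
  intro x y hx hy a
  suffices ∀ b, J u f x y a b = 0 from fun b => sub_eq_zero.1 (this b)
  induction a with
  | zero =>
    intro b
    simpa using two_site q hq u f h x y hx hy 0 (b+1) (by omega)
  | succ a ih =>
    intro b
    have := two_site q hq u f h x y hx hy (a+1) (b+1) (by omega)
    simp at this
    rw [this, ih]

lemma indep (q : ℝ) (hq : 0 ≤ q) (hq1 : q ≠ 1) (u : ℕ → ℕ → ℝ) (f : ℝ → ℕ → ℝ)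
    (h : FactorisedPALRMP u q f) (a b c : ℕ) (ha : 1 ≤ a) (hb : 1 ≤ b) : u a c = u b c := by
  have hdb := db_of q hq u f h
  set η : ZMod 3 → ℕ := fun k => if k = 0 then c else if k = 1 then a else b with hη
  have e0 : η 0 = c := rfl
  have e1 : η 1 = a := rfl
  have e2 : η 2 = b := rfl
  have hN : 1 ≤ ∑ k, η k := by
    have : ∑ k, η k = c + a + b := Fin.sum_univ_three _
    omega
  have key : ∀ x : ZMod 3 → ℝ, (∀ k, 0 < x k) → ∑ k, x k * (RW 3 u η k - LW 3 u η k) = 0 := by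
    intro x hx
    have h1 := flow_diff 3 u f hdb q x hx η
    rw [h.2 3 _ (by norm_num) hN x hx η rfl, sub_self] at h1
    have hp : (∏ ℓ, f (x ℓ) (η ℓ)) ≠ 0 := (Finset.prod_pos fun i _ => h.1 _ _ (hx i)).ne'
    have hq' : (1 - q) ≠ 0 := sub_ne_zero.2 hq1.symm
    have := h1.symm
    simpa [hp, hq'] using this
  have k1 := key (fun _ => 1) (by simp)
  have k2 := key (fun k => if k = 0 then 2 else 1) (by intro k; split_ifs <;> norm_num)
  rw [sum_three] at k1 k2
  have h10 : (1 : ZMod 3) ≠ 0 := by decide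
  have h20 : (2 : ZMod 3) ≠ 0 := by decide
  simp only [h10, h20, if_true, if_false] at k2
  have hD : RW 3 u η 0 = LW 3 u η 0 := by linarith
  have r1 : RightClear 3 η 0 1 := by
    intro i hi hlt
    have : ((1 : ZMod 3) - 0).val = 1 := by decide
    omega
  have r2 : ¬ RightClear 3 η 0 2 := by
    intro hh
    have := hh 1 (by norm_num) (by decide)
    simp at this
    omega
  have l1 : ¬ LeftClear 3 η 0 1 := by
    intro hh
    have := hh 1 (by norm_num) (by decide)
    have e : (0 : ZMod 3) - ((1 : ℕ) : ZMod 3) = 2 := by decide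
    rw [e] at this
    omega
  have l2 : LeftClear 3 η 0 2 := by
    intro i hi hlt
    have : ((0 : ZMod 3) - 2).val = 1 := by decide
    omega
  unfold RW LW at hD
  rw [sum_three, sum_three] at hD
  simpa [e0, e1, e2, r1, r2, l1, l2, ha, hb, h10.symm, h20.symm] using hD

lemma count_aux {L : ℕ} [NeZero L] (η : ZMod L → ℕ) (k : ZMod L) (g : ZMod L → ℕ)
    (hg : Function.Injective g) (c : ℝ) :
    (∑ ℓ, if k ≠ ℓ ∧ 1 ≤ η ℓ ∧ (∀ j, j ≠ k → g j < g ℓ → η j = 0) then c else 0) =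
      if ∃ ℓ, k ≠ ℓ ∧ 1 ≤ η ℓ then c else 0 := by
  split_ifs with hex
  · obtain ⟨m, hm, hmin⟩ := Finset.exists_min_image
      (Finset.univ.filter fun ℓ => k ≠ ℓ ∧ 1 ≤ η ℓ) g (by
        obtain ⟨ℓ, h⟩ := hex; exact ⟨ℓ, by simpa using h⟩)
    simp only [Finset.mem_filter, Finset.mem_univ, true_and] at hm hmin
    rw [Finset.sum_eq_single m]
    · rw [if_pos]
      refine ⟨hm.1, hm.2, fun j hj hlt => ?_⟩
      by_contra h0
      have := hmin j ⟨hj.symm, by omega⟩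
      omega
    · intro ℓ _ hne
      rw [if_neg]
      rintro ⟨h1, h2, h3⟩
      have := hmin ℓ ⟨h1, h2⟩
      have hne' : g m ≠ g ℓ := fun h => hne (hg h).symm
      have := h3 m hm.1.symm (by omega)
      omega
    · simp
  · refine Finset.sum_eq_zero fun ℓ _ => if_neg fun h => hex ⟨ℓ, h.1, h.2.1⟩

lemma suff (q : ℝ) (u : ℕ → ℕ → ℝ) (φ : ℕ → ℝ) (hφ : ∀ n, 0 < φ n)
    (hu : ∀ m n : ℕ, 1 ≤ m → u m n = φ n) :
    FactorisedPALRMP u q (fun x n => x ^ n * ∏ i ∈ Finset.range n, φ i) := by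
  refine ⟨fun x n hx => mul_pos (pow_pos hx n) (Finset.prod_pos fun i _ => hφ i), ?_⟩
  intro L N _ hL hN x hx η hη
  have hdb : DB u (fun x n => x ^ n * ∏ i ∈ Finset.range n, φ i) := by
    intro x y hx hy m n
    simp only [hu (m+1) n (by omega), hu (n+1) m (by omega), Finset.prod_range_succ]
    ring
  have h := flow_diff L u _ hdb q x hx η
  refine sub_eq_zero.1 (h.trans ?_)
  rw [Finset.sum_eq_zero, mul_zero]
  intro k _
  have e1 : RW L u η k = if ∃ ℓ, k ≠ ℓ ∧ 1 ≤ η ℓ then φ (η k) else 0 := by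
    rw [← count_aux η k (fun j => (j - k).val)
      ((ZMod.val_injective L).comp (sub_left_injective)) (φ (η k))]
    refine Finset.sum_congr rfl fun ℓ _ => ?_
    rw [rightClear_iff]
    split_ifs with hc
    · exact hu _ _ hc.2.1
    · rfl
  have e2 : LW L u η k = if ∃ ℓ, k ≠ ℓ ∧ 1 ≤ η ℓ then φ (η k) else 0 := by
    rw [← count_aux η k (fun j => (k - j).val)
      ((ZMod.val_injective L).comp (sub_right_injective)) (φ (η k))]
    refine Finset.sum_congr rfl fun ℓ _ => ?_
    rw [leftClear_iff]
    split_ifs with hc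
    · exact hu _ _ hc.2.1
    · rfl
  rw [e1, e2, sub_self, mul_zero]

/-- for `q ≠ 1`, the stationary distribution corresponding to `u` in the
PALRMP is factorised iff `u (m, n) = φ n` for `m ≥ 1`; in that case the one-point
function `f (x, n) = x ^ n * ∏_{i=1}^{n} φ (i - 1)` works. -/
theorem palrmp_factorised_iff
    (q : ℝ) (hq : 0 ≤ q) (hq1 : q ≠ 1)
    (u : ℕ → ℕ → ℝ) (hu : IsRate u) :
    ((∃ f : ℝ → ℕ → ℝ, FactorisedPALRMP u q f) ↔
      ∃ φ : ℕ → ℝ, (∀ n, 0 < φ n) ∧ ∀ m n : ℕ, 1 ≤ m → u m n = φ n) ∧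
    (∀ φ : ℕ → ℝ, (∀ n, 0 < φ n) → (∀ m n : ℕ, 1 ≤ m → u m n = φ n) →
      FactorisedPALRMP u q (fun x n => x ^ n * ∏ i ∈ Finset.range n, φ i)) := by
  refine ⟨⟨?_, ?_⟩, fun φ hφ h => suff q u φ hφ h⟩
  · rintro ⟨f, hf⟩
    exact ⟨fun n => u 1 n, fun n => hu.1 1 n le_rfl,
      fun m n hm => indep q hq hq1 u f hf m 1 n hm le_rfl⟩
  · rintro ⟨φ, hφ, h⟩
    exact ⟨_, suff q u φ hφ h⟩


end LRMP
end

section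
/- Suppose there exists φ : ℕ → ℝ_{>0} such that the rate function u satisfies u(m,n) = φ(n) for all m ≥ 1, n ≥ 0 (and u(0,n) = 0). Then for every L ≥ 2, N ≥ 1 and every choice of rate parameters x_1,…,x_L > 0, the factorised probability distribution on Ω_{L,N} with one-point function f(x,n) = x^n ∏_{i=1}^{n} φ(i−1) satisfies the master equation of the TALRMP (q = 0) with rate u; i.e., the stationary distribution corresponding to u in the TALRMP is factorised with this one-point function. -/
open scoped Classical

namespace LRMP


theorem aux_count (L : ℕ) [NeZero L] (ζ : ZMod L → ℕ) :
    (∑ d : ZMod L, if d ≠ 0 ∧ 1 ≤ ζ d ∧ ∀ j : ℕ, 0 < j → j < d.val → ζ (j : ZMod L) = 0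
      then (1 : ℝ) else 0) = if ∃ d, d ≠ 0 ∧ 1 ≤ ζ d then 1 else 0 := by
  split_ifs with h
  · obtain ⟨d, hd, hmin⟩ := Finset.exists_min_image
      (Finset.univ.filter fun d : ZMod L => d ≠ 0 ∧ 1 ≤ ζ d) (fun d => d.val)
      (by obtain ⟨d, hd⟩ := h; exact ⟨d, by simpa using hd⟩)
    simp only [Finset.mem_filter, Finset.mem_univ, true_and] at hd hmin
    rw [Finset.sum_eq_single d]
    · rw [if_pos]
      refine ⟨hd.1, hd.2, fun j hj hjd => ?_⟩
      by_contra hne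
      have hjL : j < L := hjd.trans (ZMod.val_lt d)
      have hv : ((j : ZMod L)).val = j := ZMod.val_cast_of_lt hjL
      have := hmin (j : ZMod L) ⟨fun h0 => by
        rw [h0, ZMod.val_zero] at hv; omega, by omega⟩
      omega
    · intro b _ hb
      rw [if_neg]
      rintro ⟨h0, h1, h2⟩
      have hle := hmin b ⟨h0, h1⟩
      have hne : d.val ≠ b.val := fun h => hb (ZMod.val_injective L h).symm
      have hd0 : 0 < d.val := by
        rcases Nat.eq_zero_or_pos d.val with h | h
        · exact absurd ((ZMod.val_eq_zero d).1 h) hd.1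
        · exact h
      have := h2 d.val hd0 (by omega)
      rw [ZMod.natCast_zmod_val] at this
      omega
    · simp
  · apply Finset.sum_eq_zero
    intro d _
    rw [if_neg]
    rintro ⟨h0, h1, _⟩
    exact h ⟨d, h0, h1⟩

theorem aux_right (L : ℕ) [NeZero L] (η : ZMod L → ℕ) (a : ZMod L) :
    (∑ l : ZMod L, if a ≠ l ∧ 1 ≤ η l ∧ RightClear L η a l then (1 : ℝ) else 0)
      = if ∃ b, b ≠ a ∧ 1 ≤ η b then 1 else 0 := by
  rw [← Equiv.sum_comp (Equiv.addLeft a)]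
  have h := aux_count L (fun d => η (a + d))
  convert h using 2
  · simp [RightClear]
  · constructor
    · rintro ⟨b, hb, h1⟩
      exact ⟨b - a, sub_ne_zero.2 hb, by simpa using h1⟩
    · rintro ⟨d, hd, h1⟩
      exact ⟨a + d, by simpa using hd, h1⟩

theorem aux_left (L : ℕ) [NeZero L] (η : ZMod L → ℕ) (a : ZMod L) :
    (∑ k : ZMod L, if k ≠ a ∧ 1 ≤ η k ∧ RightClear L η k a then (1 : ℝ) else 0)
      = if ∃ b, b ≠ a ∧ 1 ≤ η b then 1 else 0 := by
  rw [← Equiv.sum_comp (Equiv.subLeft a)]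
  have h := aux_count L (fun d => η (a - d))
  convert h using 2 with d
  · have : RightClear L η (a - d) a ↔
        ∀ j : ℕ, 0 < j → j < d.val → η (a - (j : ZMod L)) = 0 := by
      unfold RightClear
      rw [sub_sub_cancel]
      constructor
      · intro H j h0 h1
        have := H (d.val - j) (by omega) (by omega)
        rw [Nat.cast_sub h1.le, ZMod.natCast_zmod_val] at this
        rw [← this]; congr 1; ring
      · intro H j h0 h1
        have := H (d.val - j) (by omega) (by omega)
        rw [Nat.cast_sub h1.le, ZMod.natCast_zmod_val] at this
        rw [← this]; congr 1; ring
    simp [this]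
  · constructor
    · rintro ⟨b, hb, h1⟩
      exact ⟨a - b, sub_ne_zero.2 hb.symm, by simpa using h1⟩
    · rintro ⟨d, hd, h1⟩
      exact ⟨a - d, by simpa using hd, h1⟩

theorem aux_clear (L : ℕ) [NeZero L] (η : ZMod L → ℕ) (k l : ZMod L) :
    RightClear L (move L η l k) k l ↔ RightClear L η k l := by
  have key : ∀ i : ℕ, 0 < i → i < (l - k).val →
      move L η l k (k + (i : ZMod L)) = η (k + (i : ZMod L)) := by
    intro i h0 h1
    have hv : ((i : ZMod L)).val = i := ZMod.val_cast_of_lt (h1.trans (ZMod.val_lt _))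
    have e1 : k + (i : ZMod L) ≠ l := by
      intro h
      rw [← h, add_sub_cancel_left, hv] at h1
      omega
    have e2 : k + (i : ZMod L) ≠ k := by
      intro h
      rw [add_eq_left.1 h, ZMod.val_zero] at hv
      omega
    simp [move, e1, e2]
  constructor
  · intro H i h0 h1
    rw [← key i h0 h1]; exact H i h0 h1
  · intro H i h0 h1
    rw [key i h0 h1]; exact H i h0 h1

theorem aux_weight (φ : ℕ → ℝ) (L : ℕ) [NeZero L] (x : ZMod L → ℝ)
    (η : ZMod L → ℕ) (k l : ZMod L) (hkl : k ≠ l) (hl : 1 ≤ η l) :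
    (∏ a, (x a ^ (move L η l k a) * ∏ i ∈ Finset.range (move L η l k a), φ i))
        * (x l * φ (η l - 1))
      = (∏ a, (x a ^ (η a) * ∏ i ∈ Finset.range (η a), φ i)) * (x k * φ (η k)) := by
  have hk : k ∈ (Finset.univ.erase l : Finset (ZMod L)) := by simp [hkl]
  rw [← Finset.mul_prod_erase _ _ (Finset.mem_univ l), ← Finset.mul_prod_erase _ _ hk,
    ← Finset.mul_prod_erase Finset.univ (fun a => x a ^ (η a) * _) (Finset.mem_univ l),
    ← Finset.mul_prod_erase _ (fun a => x a ^ (η a) * _) hk]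
  have hrest : ∏ a ∈ (Finset.univ.erase l).erase k,
      (x a ^ (move L η l k a) * ∏ i ∈ Finset.range (move L η l k a), φ i)
      = ∏ a ∈ (Finset.univ.erase l).erase k, (x a ^ (η a) * ∏ i ∈ Finset.range (η a), φ i) := by
    apply Finset.prod_congr rfl
    intro a ha
    simp only [Finset.mem_erase] at ha
    simp [move, ha.1, ha.2.1]
  rw [hrest]
  have ml : move L η l k l = η l - 1 := by simp [move]
  have mk : move L η l k k = η k + 1 := by simp [move, hkl]
  rw [ml, mk]
  obtain ⟨n, hn⟩ : ∃ n, η l = n + 1 := ⟨η l - 1, by omega⟩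
  rw [hn, Nat.add_sub_cancel, Finset.prod_range_succ, Finset.prod_range_succ]
  ring

/-- if `u (m, n) = φ n` for `m ≥ 1` (and `u (0, n) = 0`), then the
stationary distribution corresponding to `u` in the TALRMP (`q = 0`) is factorised
with one-point function `f (x, n) = x ^ n * ∏_{i=1}^{n} φ (i - 1)`. -/
theorem talrmp_factorised_of_zero_range
    (u : ℕ → ℕ → ℝ) (hu : IsRate u)
    (φ : ℕ → ℝ) (hφ : ∀ n, 0 < φ n)
    (huφ : ∀ m n : ℕ, 1 ≤ m → u m n = φ n) :
    FactorisedPALRMP u 0 (fun x n => x ^ n * ∏ i ∈ Finset.range n, φ i) := by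
  refine ⟨fun x n hx => mul_pos (pow_pos hx n) (Finset.prod_pos fun i _ => hφ i), ?_⟩
  intro L N _ _ _ x _ η _
  unfold inflow outflow
  set W : ℝ := ∏ a, (x a ^ (η a) * ∏ i ∈ Finset.range (η a), φ i) with hW
  have hin : ∀ k l : ZMod L,
      (if 1 ≤ η l then (∏ a, (x a ^ (move L η l k a) *
          ∏ i ∈ Finset.range (move L η l k a), φ i)) *
          hopRate L u x 0 (move L η l k) k l else 0)
      = W * (x k * φ (η k)) *
        (if k ≠ l ∧ 1 ≤ η l ∧ RightClear L η k l then 1 else 0) := by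
    intro k l
    unfold hopRate
    rw [aux_clear]
    by_cases hl : 1 ≤ η l
    · by_cases hkl : k = l
      · simp [hkl]
      · have ml : move L η l k l = η l - 1 := by simp [move]
        have mk : move L η l k k = η k + 1 := by simp [move, hkl]
        rw [ml, mk, huφ _ _ (Nat.le_add_left 1 _)]
        by_cases hc : RightClear L η k l
        · have := aux_weight φ L x η k l hkl hl
          simp [hl, hkl, hc, this, hW]
        · simp [hc]
    · simp [hl]
  have hout : ∀ k l : ZMod L, W * hopRate L u x 0 η k l
      = W * (x l * φ (η l)) *
        (if k ≠ l ∧ 1 ≤ η k ∧ RightClear L η k l then 1 else 0) := by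
    intro k l
    unfold hopRate
    by_cases hk : 1 ≤ η k
    · rw [huφ _ _ hk]; simp
    · simp [hk]
  simp only [hin, ← hW, hout]
  conv_rhs => rw [Finset.sum_comm]
  apply Finset.sum_congr rfl
  intro a _
  rw [← Finset.mul_sum, ← Finset.mul_sum, aux_right, aux_left]

end LRMP
end

section
/- Suppose the stationary distribution corresponding to the rate function u is factorised in the TALRMP (q = 0). Then u(m,0) takes the same value for all m ≥ 1, and there exists a one-point function f corresponding to u satisfying f(x,n) = x^n · f(x,0) · ∏_{i=1}^{n} u(1,i−1) for all x > 0 and n ∈ ℕ. -/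
open scoped Classical

namespace LRMP

lemma sum2 (f : ZMod 2 → ℝ) : ∑ k, f k = f 0 + f 1 := Fin.sum_univ_two f
lemma sum2n (f : ZMod 2 → ℕ) : ∑ k, f k = f 0 + f 1 := Fin.sum_univ_two f
lemma prod2 (f : ZMod 2 → ℝ) : ∏ k, f k = f 0 * f 1 := Fin.prod_univ_two f
lemma sum3 (f : ZMod 3 → ℝ) : ∑ k, f k = f 0 + f 1 + f 2 := Fin.sum_univ_three f
lemma sum3n (f : ZMod 3 → ℕ) : ∑ k, f k = f 0 + f 1 + f 2 := Fin.sum_univ_three f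
lemma prod3 (f : ZMod 3 → ℝ) : ∏ k, f k = f 0 * f 1 * f 2 := Fin.prod_univ_three f

lemma rc_adj (L : ℕ) (η : ZMod L → ℕ) (k l : ZMod L) (h : (l - k).val ≤ 1) :
    RightClear L η k l := by
  intro i h1 h2
  omega

lemma rc_two (L : ℕ) (η : ZMod L → ℕ) (k l : ZMod L) (h : (l - k).val = 2) :
    RightClear L η k l ↔ η (k + 1) = 0 := by
  constructor
  · intro H
    have := H 1 (by norm_num) (by omega)
    simpa using this
  · intro H i h1 h2
    have : i = 1 := by omega
    subst this
    simpa using H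

lemma rc2a (η : ZMod 2 → ℕ) : RightClear 2 η 0 1 := rc_adj _ _ _ _ (by decide)
lemma rc2b (η : ZMod 2 → ℕ) : RightClear 2 η 1 0 := rc_adj _ _ _ _ (by decide)
lemma rc3a (η : ZMod 3 → ℕ) : RightClear 3 η 0 1 := rc_adj _ _ _ _ (by decide)
lemma rc3b (η : ZMod 3 → ℕ) : RightClear 3 η 1 2 := rc_adj _ _ _ _ (by decide)
lemma rc3c (η : ZMod 3 → ℕ) : RightClear 3 η 2 0 := rc_adj _ _ _ _ (by decide)
lemma rc3d (η : ZMod 3 → ℕ) : RightClear 3 η 0 2 ↔ η 1 = 0 := rc_two _ _ _ _ (by decide)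
lemma rc3e (η : ZMod 3 → ℕ) : RightClear 3 η 1 0 ↔ η 2 = 0 := rc_two _ _ _ _ (by decide)
lemma rc3f (η : ZMod 3 → ℕ) : RightClear 3 η 2 1 ↔ η 0 = 0 := rc_two _ _ _ _ (by decide)

lemma z2a : (0 : ZMod 2) ≠ 1 := by decide
lemma z2b : (1 : ZMod 2) ≠ 0 := by decide
lemma z3a : (0 : ZMod 3) ≠ 1 := by decide
lemma z3b : (1 : ZMod 3) ≠ 0 := by decide
lemma z3c : (0 : ZMod 3) ≠ 2 := by decide
lemma z3d : (2 : ZMod 3) ≠ 0 := by decide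
lemma z3e : (1 : ZMod 3) ≠ 2 := by decide
lemma z3f : (2 : ZMod 3) ≠ 1 := by decide

lemma db {u : ℕ → ℕ → ℝ} {f : ℝ → ℕ → ℝ} (hf : FactorisedPALRMP u 0 f)
    (a b : ℝ) (ha : 0 < a) (hb : 0 < b) (m : ℕ) : ∀ n : ℕ,
    f a (m+1) * f b n * (b * u (m+1) n) = f a m * f b (n+1) * (a * u (n+1) m) := by
  induction m with
  | zero =>
    intro n
    have H := hf.2 2 (n+1) le_rfl (by omega) (fun i => if i = 0 then a else b)
      (by intro l; split_ifs <;> assumption)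
      (fun i => if i = 0 then 0 else n+1) (by simp [sum2n, z2b])
    simp [inflow, outflow, sum2, prod2, hopRate, move, rc2a, rc2b, z2a, z2b] at H
    linarith
  | succ m ih =>
    intro n
    have H := hf.2 2 (m+1+(n+1)) le_rfl (by omega) (fun i => if i = 0 then a else b)
      (by intro l; split_ifs <;> assumption)
      (fun i => if i = 0 then m+1 else n+1) (by simp [sum2n, z2b])
    simp [inflow, outflow, sum2, prod2, hopRate, move, rc2a, rc2b, z2a, z2b] at H
    have := ih (n+1)
    linarith

lemma uconst {u : ℕ → ℕ → ℝ} (hu : IsRate u) {f : ℝ → ℕ → ℝ} (hf : FactorisedPALRMP u 0 f)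
    (m n : ℕ) : u (m+1) 0 = u (n+1) 0 := by
  have H := hf.2 3 (m+1+(n+1)) (by omega) (by omega) (fun i => 1)
      (by intro l; norm_num)
      (fun i => if i = 0 then m+1 else if i = 1 then n+1 else 0)
      (by simp [sum3n, z3b, z3d, z3f])
  simp [inflow, outflow, sum3, prod3, hopRate, move, rc3a, rc3b, rc3c, rc3d, rc3e, rc3f,
    z3a, z3b, z3c, z3d, z3e, z3f] at H
  have h1 := db hf 1 1 one_pos one_pos m (n+1)
  have h2 := db hf 1 1 one_pos one_pos (m+1) n
  have h3 := db hf 1 1 one_pos one_pos m 0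
  have p1 := hf.1 1 (m+1) one_pos
  have p2 := hf.1 1 (n+1) one_pos
  have p3 := hf.1 1 0 one_pos
  have key : f 1 (m+1) * f 1 (n+1) * f 1 0 * (u (m+1) 0 - u (n+1) 0) = 0 := by
    linear_combination H + f 1 (n+1) * h3 - f 1 0 * h2 + f 1 0 * h1
  have : f 1 (m+1) * f 1 (n+1) * f 1 0 ≠ 0 := by positivity
  have := (mul_eq_zero.mp key).resolve_left this
  linarith

lemma move_prod {L : ℕ} [NeZero L] (η : ZMod L → ℕ) (k l : ZMod L) (hkl : l ≠ k)
    (h : 1 ≤ η l) (d : ℝ) : ∏ a, d ^ (move L η l k a) = ∏ a, d ^ (η a) := by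
  rw [Finset.prod_pow_eq_pow_sum, Finset.prod_pow_eq_pow_sum]
  congr 1
  rw [← Finset.add_sum_erase _ _ (Finset.mem_univ l),
    ← Finset.add_sum_erase _ η (Finset.mem_univ l),
    ← Finset.add_sum_erase _ _ (Finset.mem_erase.mpr ⟨hkl.symm, Finset.mem_univ k⟩),
    ← Finset.add_sum_erase _ η (Finset.mem_erase.mpr ⟨hkl.symm, Finset.mem_univ k⟩)]
  have : ∑ x ∈ (Finset.univ.erase l).erase k, move L η l k x
      = ∑ x ∈ (Finset.univ.erase l).erase k, η x := by
    apply Finset.sum_congr rfl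
    intro x hx
    simp only [Finset.mem_erase] at hx
    simp [move, hx.1, hx.2.1]
  rw [this]
  simp [move, hkl.symm]
  omega

lemma scale {u : ℕ → ℕ → ℝ} {f : ℝ → ℕ → ℝ} (hf : FactorisedPALRMP u 0 f)
    (d : ℝ) (hd : 0 < d) : FactorisedPALRMP u 0 (fun x n => d ^ n * f x n) := by
  refine ⟨fun x n hx => mul_pos (pow_pos hd n) (hf.1 x n hx), ?_⟩
  intro L N _ hL hN x hx η hη
  have H := hf.2 L N hL hN x hx η hη
  have e1 : inflow L u x 0 (fun η => ∏ l, d ^ (η l) * f (x l) (η l)) η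
      = (∏ a, d ^ (η a)) * inflow L u x 0 (fun η => ∏ l, f (x l) (η l)) η := by
    simp only [inflow, Finset.mul_sum]
    refine Finset.sum_congr rfl fun k _ => Finset.sum_congr rfl fun l _ => ?_
    by_cases h : 1 ≤ η l
    · by_cases hkl : l = k
      · subst hkl
        simp [hopRate]
      · rw [if_pos h, if_pos h, Finset.prod_mul_distrib, move_prod η k l hkl h]
        ring
    · simp [h]
  have e2 : outflow L u x 0 (fun η => ∏ l, d ^ (η l) * f (x l) (η l)) η
      = (∏ a, d ^ (η a)) * outflow L u x 0 (fun η => ∏ l, f (x l) (η l)) η := by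
    simp only [outflow, Finset.mul_sum]
    refine Finset.sum_congr rfl fun k _ => Finset.sum_congr rfl fun l _ => ?_
    rw [Finset.prod_mul_distrib]
    ring
  rw [e1, e2, H]

/-- if the stationary distribution corresponding to `u` is factorised in
the TALRMP (`q = 0`), then `u (m, 0)` is constant for `m ≥ 1` and some one-point
function `f` for `u` satisfies `f (x, n) = x ^ n * f (x, 0) * ∏_{i=1}^{n} u (1, i-1)`. -/
theorem talrmp_onepoint_form
    (u : ℕ → ℕ → ℝ) (hu : IsRate u)
    (h : ∃ f : ℝ → ℕ → ℝ, FactorisedPALRMP u 0 f) :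
    (∀ m m' : ℕ, 1 ≤ m → 1 ≤ m' → u m 0 = u m' 0) ∧
    ∃ f : ℝ → ℕ → ℝ, FactorisedPALRMP u 0 f ∧
      ∀ (x : ℝ) (n : ℕ), 0 < x →
        f x n = x ^ n * f x 0 * ∏ i ∈ Finset.range n, u 1 i := by
  obtain ⟨f, hf⟩ := h
  have hc : ∀ m m' : ℕ, 1 ≤ m → 1 ≤ m' → u m 0 = u m' 0 := by
    intro m m' h1 h2
    obtain ⟨a, rfl⟩ := Nat.exists_eq_add_of_le' h1
    obtain ⟨b, rfl⟩ := Nat.exists_eq_add_of_le' h2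
    exact uconst hu hf a b
  refine ⟨hc, ?_⟩
  have q0 := hf.1 1 0 one_pos
  have q1 := hf.1 1 1 one_pos
  have qu := hu.1 1 0 le_rfl
  refine ⟨_, scale hf (u 1 0 * f 1 0 / f 1 1) (by positivity), ?_⟩
  intro x n hx
  induction n with
  | zero => simp
  | succ n ih =>
    have D := db hf 1 x one_pos hx 0 n
    rw [hc (n+1) 1 (by omega) le_rfl] at D
    simp only [zero_add] at D
    rw [Finset.prod_range_succ, pow_succ x]
    have E : (u 1 0 * f 1 0 / f 1 1) * f x (n+1) = x * u 1 n * f x n := by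
      field_simp
      linarith
    calc _ = (u 1 0 * f 1 0 / f 1 1) ^ n * ((u 1 0 * f 1 0 / f 1 1) * f x (n+1)) := by ring
      _ = x * u 1 n * ((u 1 0 * f 1 0 / f 1 1) ^ n * f x n) := by rw [E]; ring
      _ = _ := by rw [ih]; ring

end LRMP
end

section
/- Fix q ≥ 0 with q ≠ 1. The stationary distribution corresponding to a rate function u is factorised in the TALRMP (q = 0) if and only if the stationary distribution corresponding to u is factorised in the PALRMP with asymmetry parameter q; moreover the same one-point function works for both. -/
open scoped Classical

namespace LRMP

theorem neg_right (L : ℕ) (η : ZMod L → ℕ) (k ℓ : ZMod L) :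
    RightClear L (fun a => η (-a)) (-k) (-ℓ) ↔ LeftClear L η k ℓ := by
  unfold RightClear LeftClear
  have h1 : -ℓ - -k = k - ℓ := by ring
  have h2 : ∀ i : ℕ, -(-k + (i : ZMod L)) = k - i := fun i => by ring
  simp only [h1, h2]

theorem hopRate_split (L : ℕ) (u : ℕ → ℕ → ℝ) (x : ZMod L → ℝ) (q : ℝ)
    (η : ZMod L → ℕ) (k ℓ : ZMod L) :
    hopRate L u x q η k ℓ = hopRate L u x 0 η k ℓ +
      q * hopRate L u (fun a => x (-a)) 0 (fun a => η (-a)) (-k) (-ℓ) := by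
  unfold hopRate
  simp only [neg_right, neg_neg, ne_eq, neg_inj, zero_mul, ite_self, add_zero, mul_ite, mul_zero]

theorem move_neg (L : ℕ) (η : ZMod L → ℕ) (k ℓ : ZMod L) :
    move L (fun a => η (-a)) (-k) (-ℓ) = fun a => move L η k ℓ (-a) := by
  funext a
  simp only [move, neg_eq_iff_eq_neg]

/-- The factorised weight. -/
noncomputable def wt (L : ℕ) [NeZero L] (f : ℝ → ℕ → ℝ) (x : ZMod L → ℝ) (η : ZMod L → ℕ) : ℝ :=
  ∏ ℓ, f (x ℓ) (η ℓ)

theorem wt_neg (L : ℕ) [NeZero L] (f : ℝ → ℕ → ℝ) (x : ZMod L → ℝ) (η : ZMod L → ℕ) :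
    wt L f (fun a => x (-a)) (fun a => η (-a)) = wt L f x η :=
  Equiv.prod_comp (Equiv.neg (ZMod L)) (fun ℓ => f (x ℓ) (η ℓ))

theorem sum_neg2 (L : ℕ) [NeZero L] (g : ZMod L → ZMod L → ℝ) :
    ∑ k, ∑ ℓ, g (-k) (-ℓ) = ∑ k, ∑ ℓ, g k ℓ := by
  rw [← Equiv.sum_comp (Equiv.neg (ZMod L)) (fun k => ∑ ℓ, g k ℓ)]
  refine Finset.sum_congr rfl fun k _ => ?_
  exact Equiv.sum_comp (Equiv.neg (ZMod L)) (fun ℓ => g (-k) ℓ)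

theorem outflow_split (L : ℕ) [NeZero L] (u : ℕ → ℕ → ℝ) (x : ZMod L → ℝ) (q : ℝ)
    (f : ℝ → ℕ → ℝ) (η : ZMod L → ℕ) :
    outflow L u x q (wt L f x) η = outflow L u x 0 (wt L f x) η +
      q * outflow L u (fun a => x (-a)) 0 (wt L f fun a => x (-a)) (fun a => η (-a)) := by
  unfold outflow
  rw [← sum_neg2 L (fun k ℓ => wt L f (fun a => x (-a)) (fun a => η (-a)) *
    hopRate L u (fun a => x (-a)) 0 (fun a => η (-a)) k ℓ)]
  simp only [Finset.mul_sum, ← Finset.sum_add_distrib]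
  refine Finset.sum_congr rfl fun k _ => Finset.sum_congr rfl fun ℓ _ => ?_
  rw [hopRate_split L u x q, wt_neg]
  ring

theorem inflow_split (L : ℕ) [NeZero L] (u : ℕ → ℕ → ℝ) (x : ZMod L → ℝ) (q : ℝ)
    (f : ℝ → ℕ → ℝ) (η : ZMod L → ℕ) :
    inflow L u x q (wt L f x) η = inflow L u x 0 (wt L f x) η +
      q * inflow L u (fun a => x (-a)) 0 (wt L f fun a => x (-a)) (fun a => η (-a)) := by
  unfold inflow
  rw [← sum_neg2 L (fun k ℓ => if 1 ≤ η (-ℓ) then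
    wt L f (fun a => x (-a)) (move L (fun a => η (-a)) ℓ k) *
    hopRate L u (fun a => x (-a)) 0 (move L (fun a => η (-a)) ℓ k) k ℓ else 0)]
  simp only [Finset.mul_sum, ← Finset.sum_add_distrib]
  refine Finset.sum_congr rfl fun k _ => Finset.sum_congr rfl fun ℓ _ => ?_
  rw [hopRate_split L u x q, move_neg, wt_neg, neg_neg]
  split_ifs <;> ring

/-- for `q ≠ 1`, the stationary distribution corresponding to `u` is
factorised in the TALRMP (`q = 0`) iff it is factorised in the PALRMP with
asymmetry `q`, with the same one-point function working for both. -/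
theorem talrmp_iff_palrmp
    (q : ℝ) (hq : 0 ≤ q) (hq1 : q ≠ 1)
    (u : ℕ → ℕ → ℝ) (hu : IsRate u)
    (f : ℝ → ℕ → ℝ) :
    FactorisedPALRMP u 0 f ↔ FactorisedPALRMP u q f := by
  unfold FactorisedPALRMP
  refine and_congr_right fun _ => forall_congr' fun L => forall_congr' fun N => ?_
  refine forall_congr' fun _ => forall_congr' fun _ => forall_congr' fun _ => ?_
  have hsum : ∀ η : ZMod L → ℕ, ∑ a, η (-a) = ∑ a, η a := fun η =>
    Equiv.sum_comp (Equiv.neg (ZMod L)) η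
  constructor
  · intro h x hx η hη
    have h1 : inflow L u x 0 (wt L f x) η = outflow L u x 0 (wt L f x) η := h x hx η hη
    have h2 : inflow L u (fun a => x (-a)) 0 (wt L f fun a => x (-a)) (fun a => η (-a)) =
        outflow L u (fun a => x (-a)) 0 (wt L f fun a => x (-a)) (fun a => η (-a)) :=
      h (fun a => x (-a)) (fun a => hx _) (fun a => η (-a)) ((hsum η).trans hη)
    change inflow L u x q (wt L f x) η = outflow L u x q (wt L f x) η
    rw [inflow_split, outflow_split, h1, h2]
  · intro h x hx η hη
    have h1 : inflow L u x q (wt L f x) η = outflow L u x q (wt L f x) η := h x hx η hη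
    have h2 : inflow L u (fun a => x (-a)) q (wt L f fun a => x (-a)) (fun a => η (-a)) =
        outflow L u (fun a => x (-a)) q (wt L f fun a => x (-a)) (fun a => η (-a)) :=
      h (fun a => x (-a)) (fun a => hx _) (fun a => η (-a)) ((hsum η).trans hη)
    change inflow L u x 0 (wt L f x) η = outflow L u x 0 (wt L f x) η
    rw [inflow_split, outflow_split] at h1 h2
    simp only [neg_neg] at h2
    have hne : (1 - q) * (1 + q) ≠ 0 :=
      mul_ne_zero (sub_ne_zero.mpr (Ne.symm hq1)) (by positivity)
    refine mul_left_cancel₀ hne ?_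
    linear_combination h1 - q * h2

end LRMP
end

section
/- The stationary distribution corresponding to a rate function u is factorised, both in the SLRMP (q = 1, general rate parameters) and in the homogeneous SLRMP (q = 1, all rate parameters equal to 1), if and only if for all m, n ≥ 1, u(m,n)/(u(m,0)·u(1,n)) = u(n+1,m−1)/(u(n+1,0)·u(1,m−1)). In that case the one-point function f(x,n) = x^n ∏_{i=1}^{n} (u(1,i−1)/u(i,0)) works for the SLRMP, and f(n) = ∏_{i=1}^{n} (u(1,i−1)/u(i,0)) works for the homogeneous SLRMP. -/
open scoped Classical

namespace LRMP

theorem clear_symm (L : ℕ) [NeZero L] (η : ZMod L → ℕ) (a b : ZMod L) (hab : a ≠ b) :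
    RightClear L (move L η a b) b a ↔ LeftClear L η a b := by
  have hlt : (a - b).val < L := ZMod.val_lt _
  have hd : (((a - b).val : ℕ) : ZMod L) = a - b := ZMod.natCast_zmod_val _
  have hne : ∀ i : ℕ, 0 < i → i < (a - b).val → b + (i : ZMod L) ≠ b ∧ b + (i : ZMod L) ≠ a := by
    intro i hi hi2
    constructor
    · intro h
      have h0 : (i : ZMod L) = 0 := by simpa using h
      have := congrArg ZMod.val h0
      rw [ZMod.val_natCast_of_lt (by omega), ZMod.val_zero] at this
      omega
    · intro h
      have h0 : (i : ZMod L) = a - b := by rw [← h]; ring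
      have := congrArg ZMod.val h0
      rw [ZMod.val_natCast_of_lt (by omega)] at this
      omega
  have hflip : ∀ i : ℕ, i ≤ (a - b).val →
      b + (((a - b).val - i : ℕ) : ZMod L) = a - (i : ZMod L) := by
    intro i hi
    rw [Nat.cast_sub hi, hd]; ring
  constructor
  · intro h i hi hi2
    have h1 := h ((a - b).val - i) (by omega) (by omega)
    have h2 := hne ((a - b).val - i) (by omega) (by omega)
    unfold move at h1
    rw [if_neg h2.2, if_neg h2.1, hflip i hi2.le] at h1
    exact h1
  · intro h i hi hi2
    have h1 := h ((a - b).val - i) (by omega) (by omega)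
    have h2 := hne i hi hi2
    have h3 := hflip ((a - b).val - i) (by omega)
    rw [show (a - b).val - ((a - b).val - i) = i by omega] at h3
    unfold move
    rw [if_neg h2.2, if_neg h2.1, h3]
    exact h1

theorem clear_symm' (L : ℕ) [NeZero L] (η : ZMod L → ℕ) (a b : ZMod L) (hab : a ≠ b) :
    LeftClear L (move L η a b) b a ↔ RightClear L η a b := by
  have key : ∀ (ζ : ZMod L → ℕ) (c d : ZMod L),
      LeftClear L ζ c d ↔ RightClear L (fun z => ζ (-z)) (-c) (-d) := by
    intro ζ c d
    unfold LeftClear RightClear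
    rw [show -d - -c = c - d by ring]
    simp only [show ∀ i : ℕ, -(-c + (i : ZMod L)) = c - i from fun i => by ring]
  have hm : (fun z => move L η a b (-z)) = move L (fun z => η (-z)) (-a) (-b) := by
    funext z
    simp only [move, neg_eq_iff_eq_neg]
  rw [key, hm, clear_symm L _ (-a) (-b) (by simpa using hab), key]
  simp

theorem stationary_of_db (L N : ℕ) [NeZero L] (u : ℕ → ℕ → ℝ) (x : ZMod L → ℝ)
    (F : ZMod L → ℕ → ℝ)
    (h : ∀ a b m n, F a (m + 1) * F b n * (x b * u (m + 1) n)
      = F a m * F b (n + 1) * (x a * u (n + 1) m)) :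
    IsStationary L N u x 1 (fun η => ∏ ℓ, F ℓ (η ℓ)) := by
  intro η _
  unfold inflow outflow
  rw [Finset.sum_comm]
  refine Finset.sum_congr rfl fun a _ => Finset.sum_congr rfl fun b _ => ?_
  by_cases hab : a = b
  · subst hab
    simp [hopRate]
  by_cases ha : 1 ≤ η a
  swap
  · simp [hopRate, ha]
  obtain ⟨m, hm⟩ : ∃ m, η a = m + 1 := ⟨η a - 1, by omega⟩
  have split : ∀ ζ : ZMod L → ℕ, ∏ c, F c (ζ c) =
      F a (ζ a) * (F b (ζ b) * ∏ c ∈ (Finset.univ.erase a).erase b, F c (ζ c)) := by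
    intro ζ
    rw [Finset.mul_prod_erase (Finset.univ.erase a) (fun c => F c (ζ c))
      (by simp [Ne.symm hab]), Finset.mul_prod_erase _ (fun c => F c (ζ c)) (by simp)]
  have hrest : ∏ c ∈ (Finset.univ.erase a).erase b, F c (move L η a b c)
      = ∏ c ∈ (Finset.univ.erase a).erase b, F c (η c) := by
    refine Finset.prod_congr rfl fun c hc => ?_
    simp only [Finset.mem_erase] at hc
    simp [move, hc.1, hc.2.1]
  have hma : move L η a b a = m := by simp [move, hm]
  have hmb : move L η a b b = η b + 1 := by simp [move, Ne.symm hab]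
  simp only [if_pos ha]
  rw [split, split, hrest, hma, hmb, hm]
  unfold hopRate
  rw [clear_symm L η a b hab, clear_symm' L η a b hab, hma, hmb, hm]
  have := h a b m (η b)
  generalize ∏ c ∈ (Finset.univ.erase a).erase b, F c (η c) = P
  simp only [ne_eq, hab, Ne.symm hab, not_false_eq_true, true_and, Nat.le_add_left]
  split_ifs <;> first | linear_combination (-2 * P) * this | linear_combination (-P) * this | ring

theorem balance_two (u : ℕ → ℕ → ℝ) (f : ℕ → ℝ) (h : FactorisedHomog u 1 f) (m n : ℕ)
    (hmn : 1 ≤ m + n) :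
    (if 1 ≤ n then f (m + 1) * f (n - 1) * u (m + 1) (n - 1) else 0) +
    (if 1 ≤ m then f (m - 1) * f (n + 1) * u (n + 1) (m - 1) else 0) =
    f m * f n * ((if 1 ≤ m then u m n else 0) + (if 1 ≤ n then u n m else 0)) := by
  obtain ⟨η, e0, e1⟩ : ∃ η : ZMod 2 → ℕ, η 0 = m ∧ η 1 = n :=
    ⟨(![m, n] : Fin 2 → ℕ), rfl, rfl⟩
  have hb := h.2 2 (m + n) le_rfl hmn η
    (by rw [← e0, ← e1]; exact Fin.sum_univ_two η)
  have hR : ∀ (ζ : ZMod 2 → ℕ) (k l : ZMod 2), RightClear 2 ζ k l := by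
    intro ζ k l i h1 h2
    have := ZMod.val_lt (l - k)
    omega
  have hL : ∀ (ζ : ZMod 2 → ℕ) (k l : ZMod 2), LeftClear 2 ζ k l := by
    intro ζ k l i h1 h2
    have := ZMod.val_lt (k - l)
    omega
  have hS : ∀ g : ZMod 2 → ℝ, ∑ k, g k = g 0 + g 1 := fun g => Fin.sum_univ_two g
  have hP : ∀ g : ZMod 2 → ℝ, ∏ k, g k = g 0 * g 1 := fun g => Fin.prod_univ_two g
  have h01 : (0 : ZMod 2) ≠ 1 := by decide
  have h10 : (1 : ZMod 2) ≠ 0 := by decide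
  unfold inflow outflow at hb
  simp only [hS, hP, hopRate, hR, hL, move, e0, e1, h01, h10, ne_eq, not_true_eq_false,
    not_false_eq_true, false_and, true_and, and_true, if_true, if_false, add_zero, zero_add,
    one_mul, mul_zero, ite_self, Nat.le_add_left] at hb
  split_ifs at hb ⊢ <;> linear_combination hb / 2

theorem db_two (u : ℕ → ℕ → ℝ) (f : ℕ → ℝ) (h : FactorisedHomog u 1 f) (m : ℕ) :
    ∀ n, f (m + 1) * f n * u (m + 1) n = f m * f (n + 1) * u (n + 1) m := by
  induction m with
  | zero =>
    intro n
    have := balance_two u f h 0 (n + 1) (by omega)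
    simpa using this
  | succ m ih =>
    intro n
    have := balance_two u f h (m + 1) (n + 1) (by omega)
    simp only [Nat.le_add_left, if_true, Nat.add_sub_cancel] at this
    linear_combination this + ih (n + 1)

theorem cond_of_homog (u : ℕ → ℕ → ℝ) (hu : IsRate u) (f : ℕ → ℝ) (h : FactorisedHomog u 1 f)
    (m n : ℕ) (hm : 1 ≤ m) :
    u m n / (u m 0 * u 1 n) = u (n + 1) (m - 1) / (u (n + 1) 0 * u 1 (m - 1)) := by
  obtain ⟨m, rfl⟩ : ∃ k, m = k + 1 := ⟨m - 1, by omega⟩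
  rw [Nat.add_sub_cancel]
  have d := db_two u f h m n
  have d1 := db_two u f h m 0
  have d2 := db_two u f h n 0
  rw [zero_add] at d1 d2
  have p1 := hu.1 (m + 1) 0 (by omega)
  have p2 := hu.1 (n + 1) 0 (by omega)
  have p3 := hu.1 1 m le_rfl
  have p4 := hu.1 1 n le_rfl
  have f0 := h.1 0
  have f1 := h.1 1
  have fm := h.1 m
  have fn := h.1 n
  have e1 : f (m + 1) = f m * f 1 * u 1 m / (f 0 * u (m + 1) 0) := by
    rw [eq_div_iff (by positivity)]; linear_combination d1
  have e2 : f (n + 1) = f n * f 1 * u 1 n / (f 0 * u (n + 1) 0) := by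
    rw [eq_div_iff (by positivity)]; linear_combination d2
  rw [e1, e2] at d
  field_simp at d ⊢
  linear_combination d

theorem fact_of_cond (u : ℕ → ℕ → ℝ) (hu : IsRate u)
    (h : ∀ m n : ℕ, 1 ≤ m → 1 ≤ n →
        u m n / (u m 0 * u 1 n) = u (n + 1) (m - 1) / (u (n + 1) 0 * u 1 (m - 1))) :
    FactorisedPALRMP u 1 (fun x n => x ^ n * ∏ i ∈ Finset.range n, u 1 i / u (i + 1) 0) := by
  have hp : ∀ n, 0 < ∏ i ∈ Finset.range n, u 1 i / u (i + 1) 0 := fun n =>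
    Finset.prod_pos fun i _ => div_pos (hu.1 _ _ le_rfl) (hu.1 _ _ (by omega))
  refine ⟨fun x n hx => mul_pos (pow_pos hx n) (hp n), ?_⟩
  intro L N _ _ _ x _
  apply stationary_of_db L N u x
    (fun a n => x a ^ n * ∏ i ∈ Finset.range n, u 1 i / u (i + 1) 0)
  intro a b m n
  have p1 := hu.1 (m + 1) 0 (by omega)
  have p2 := hu.1 (n + 1) 0 (by omega)
  have p3 := hu.1 1 m le_rfl
  have p4 := hu.1 1 n le_rfl
  have key : u 1 m / u (m + 1) 0 * u (m + 1) n = u 1 n / u (n + 1) 0 * u (n + 1) m := by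
    rcases Nat.eq_zero_or_pos n with rfl | hn
    · rw [zero_add] at *
      field_simp
    · have := h (m + 1) n (by omega) hn
      rw [Nat.add_sub_cancel] at this
      field_simp at this ⊢
      linear_combination this
  simp only [Finset.prod_range_succ, pow_succ]
  linear_combination (x a ^ m * x a * x b ^ n * x b *
    (∏ i ∈ Finset.range m, u 1 i / u (i + 1) 0) *
    (∏ i ∈ Finset.range n, u 1 i / u (i + 1) 0)) * key

theorem homog_of_fact (u : ℕ → ℕ → ℝ) (f : ℝ → ℕ → ℝ) (h : FactorisedPALRMP u 1 f) :
    FactorisedHomog u 1 (f 1) :=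
  ⟨fun n => h.1 1 n one_pos, fun L N _ hL hN => h.2 L N hL hN (fun _ => 1) fun _ => one_pos⟩

/-- the stationary distribution corresponding to `u` is factorised both in
the SLRMP (`q = 1`) and in the homogeneous SLRMP iff the displayed condition on `u`
holds; in that case `f (x, n) = x ^ n * ∏_{i=1}^{n} (u (1,i-1) / u (i,0))` works for
the SLRMP and `f n = ∏_{i=1}^{n} (u (1,i-1) / u (i,0))` for the homogeneous SLRMP. -/
theorem slrmp_factorised_iff
    (u : ℕ → ℕ → ℝ) (hu : IsRate u) :
    (((∃ f : ℝ → ℕ → ℝ, FactorisedPALRMP u 1 f) ∧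
        ∃ f : ℕ → ℝ, FactorisedHomog u 1 f) ↔
      ∀ m n : ℕ, 1 ≤ m → 1 ≤ n →
        u m n / (u m 0 * u 1 n) = u (n + 1) (m - 1) / (u (n + 1) 0 * u 1 (m - 1))) ∧
    ((∀ m n : ℕ, 1 ≤ m → 1 ≤ n →
        u m n / (u m 0 * u 1 n) = u (n + 1) (m - 1) / (u (n + 1) 0 * u 1 (m - 1))) →
      FactorisedPALRMP u 1 (fun x n => x ^ n * ∏ i ∈ Finset.range n, u 1 i / u (i + 1) 0) ∧
      FactorisedHomog u 1 (fun n => ∏ i ∈ Finset.range n, u 1 i / u (i + 1) 0)) := by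
  have main : ∀ h : (∀ m n : ℕ, 1 ≤ m → 1 ≤ n →
        u m n / (u m 0 * u 1 n) = u (n + 1) (m - 1) / (u (n + 1) 0 * u 1 (m - 1))),
      FactorisedPALRMP u 1 (fun x n => x ^ n * ∏ i ∈ Finset.range n, u 1 i / u (i + 1) 0) ∧
      FactorisedHomog u 1 (fun n => ∏ i ∈ Finset.range n, u 1 i / u (i + 1) 0) := by
    intro h
    have h1 := fact_of_cond u hu h
    refine ⟨h1, ?_⟩
    have h2 := homog_of_fact u _ h1
    simpa only [one_pow, one_mul] using h2
  refine ⟨⟨?_, fun h => ⟨⟨_, (main h).1⟩, ⟨_, (main h).2⟩⟩⟩, main⟩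
  rintro ⟨-, f, hf⟩ m n hm _
  exact cond_of_homog u hu f hf m n hm


end LRMP
end

section
/- Fix a function g : ℕ → ℝ_{>0}. There exists a rate function u such that the stationary distribution corresponding to u in the PALRMP (for any fixed q ≥ 0, q ≠ 1) is factorised with one-point function f(x,n) = x^n·g(n); moreover this rate function u is unique up to multiplication by a positive constant. -/
open scoped Classical

namespace LRMP

lemma cast_val_lt {L : ℕ} [NeZero L] (i : ℕ) (d : ZMod L) (h : i < d.val) :
    ((i : ZMod L)).val = i :=
  ZMod.val_cast_of_lt (h.trans (ZMod.val_lt d))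

lemma between_ne {L : ℕ} [NeZero L] (i : ℕ) (d : ZMod L) (h0 : 0 < i) (h : i < d.val) :
    (i : ZMod L) ≠ 0 ∧ (i : ZMod L) ≠ d := by
  have := cast_val_lt i d h
  constructor
  · intro h'
    rw [h'] at this
    simp at this
    omega
  · intro h'
    rw [h'] at this
    omega

lemma right_move {L : ℕ} [NeZero L] (η : ZMod L → ℕ) (k ℓ : ZMod L) :
    RightClear L (move L η ℓ k) k ℓ ↔ RightClear L η k ℓ := by
  unfold RightClear
  refine forall_congr' fun i => forall_congr' fun h0 => forall_congr' fun h => ?_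
  obtain ⟨h1, h2⟩ := between_ne i _ h0 h
  have e1 : k + (i : ZMod L) ≠ k := by simpa using h1
  have e2 : k + (i : ZMod L) ≠ ℓ := fun e => h2 (by rw [← e]; ring)
  simp [move, e1, e2]

lemma left_move {L : ℕ} [NeZero L] (η : ZMod L → ℕ) (k ℓ : ZMod L) :
    LeftClear L (move L η ℓ k) k ℓ ↔ LeftClear L η k ℓ := by
  unfold LeftClear
  refine forall_congr' fun i => forall_congr' fun h0 => forall_congr' fun h => ?_
  obtain ⟨h1, h2⟩ := between_ne i _ h0 h
  have e1 : k - (i : ZMod L) ≠ k := by simpa using h1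
  have e2 : k - (i : ZMod L) ≠ ℓ := fun e => h2 (by rw [← e]; ring)
  simp [move, e1, e2]

lemma left_iff_right {L : ℕ} [NeZero L] (η : ZMod L → ℕ) (k ℓ : ZMod L) :
    LeftClear L η k ℓ ↔ RightClear L η ℓ k := by
  unfold LeftClear RightClear
  have key : ∀ i : ℕ, i < (k - ℓ).val →
      (((k - ℓ).val - i : ℕ) : ZMod L) = k - ℓ - i := by
    intro i hi
    rw [Nat.cast_sub hi.le, ZMod.natCast_zmod_val]
  constructor
  · intro H i h0 h
    have := H ((k - ℓ).val - i) (by omega) (by omega)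
    rw [key i h] at this
    rw [← this]; congr 1; ring
  · intro H i h0 h
    have := H ((k - ℓ).val - i) (by omega) (by omega)
    rw [key i h] at this
    rw [← this]; congr 1; ring

lemma left_neg {L : ℕ} (η : ZMod L → ℕ) (k ℓ : ZMod L) :
    LeftClear L η k ℓ ↔ RightClear L (fun a => η (-a)) (-k) (-ℓ) := by
  unfold LeftClear RightClear
  have e : -ℓ - -k = k - ℓ := by ring
  rw [e]
  refine forall_congr' fun i => forall_congr' fun h0 => forall_congr' fun h => ?_
  have e : -(-k + (i : ZMod L)) = k - i := by ring
  simp only [e]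

lemma right_unique {L : ℕ} [NeZero L] (η : ZMod L → ℕ) (k : ZMod L)
    (h : ∃ ℓ, ℓ ≠ k ∧ 1 ≤ η ℓ) :
    ∃! ℓ, (ℓ ≠ k ∧ 1 ≤ η ℓ) ∧ RightClear L η k ℓ := by
  have hex : ∃ i : ℕ, 0 < i ∧ i < L ∧ 1 ≤ η (k + (i : ZMod L)) := by
    obtain ⟨ℓ, h1, h2⟩ := h
    refine ⟨(ℓ - k).val, ?_, ZMod.val_lt _, ?_⟩
    · rw [Nat.pos_iff_ne_zero, Ne, ZMod.val_eq_zero, sub_eq_zero]; exact h1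
    · simpa using h2
  obtain ⟨h0, hL, h1⟩ := Nat.find_spec hex
  have hmin := fun m => @Nat.find_min _ _ hex m
  set d := Nat.find hex with hd
  have hv : ((d : ZMod L)).val = d := ZMod.val_cast_of_lt hL
  refine ⟨k + (d : ZMod L), ⟨⟨?_, h1⟩, ?_⟩, ?_⟩
  · intro e
    have : (d : ZMod L) = 0 := by simpa using e
    rw [this] at hv; simp at hv; omega
  · intro i hi hi'
    have e : k + (d : ZMod L) - k = d := by ring
    rw [e, hv] at hi'
    by_contra hne
    exact hmin i hi' ⟨hi, by omega, by omega⟩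
  · rintro ℓ ⟨⟨hk, hη⟩, hc⟩
    have hp : 0 < (ℓ - k).val := by
      rw [Nat.pos_iff_ne_zero, Ne, ZMod.val_eq_zero, sub_eq_zero]; exact hk
    have hle : d ≤ (ℓ - k).val :=
      Nat.find_min' hex ⟨hp, ZMod.val_lt _, by simpa using hη⟩
    rcases hle.lt_or_eq with hlt | heq
    · have := hc d h0 hlt
      omega
    · rw [heq, ZMod.natCast_zmod_val]; ring

lemma left_unique {L : ℕ} [NeZero L] (η : ZMod L → ℕ) (k : ZMod L)
    (h : ∃ ℓ, ℓ ≠ k ∧ 1 ≤ η ℓ) :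
    ∃! ℓ, (ℓ ≠ k ∧ 1 ≤ η ℓ) ∧ LeftClear L η k ℓ := by
  obtain ⟨ℓ, h1, h2⟩ := h
  obtain ⟨m, ⟨⟨a, b⟩, c⟩, hu⟩ := right_unique (fun a => η (-a)) (-k) ⟨-ℓ, by simpa using h1, by simpa using h2⟩
  refine ⟨-m, ⟨⟨?_, b⟩, ?_⟩, ?_⟩
  · intro e; apply a; rw [← e]; simp
  · rw [left_neg]; simpa using c
  · rintro y ⟨⟨a', b'⟩, c'⟩
    have := hu (-y) ⟨⟨by simpa using a', by simpa using b'⟩, (left_neg _ _ _).1 c'⟩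
    rw [← this]; simp

lemma sum_unique {α : Type*} [Fintype α] (P : α → Prop) [DecidablePred P] (h : ∃! a, P a) :
    (∑ a, if P a then (1 : ℝ) else 0) = 1 := by
  obtain ⟨a, ha, hu⟩ := h
  rw [Finset.sum_eq_single a]
  · simp [ha]
  · intro b _ hb
    rw [if_neg]; exact fun h => hb (hu b h)
  · simp

lemma count_eq {L : ℕ} [NeZero L] (η : ZMod L → ℕ) (k : ZMod L) :
    (∑ ℓ, if (ℓ ≠ k ∧ 1 ≤ η ℓ) ∧ RightClear L η k ℓ then (1 : ℝ) else 0) =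
    ∑ ℓ, if (ℓ ≠ k ∧ 1 ≤ η ℓ) ∧ LeftClear L η k ℓ then (1 : ℝ) else 0 := by
  by_cases h : ∃ ℓ, ℓ ≠ k ∧ 1 ≤ η ℓ
  · rw [sum_unique _ (right_unique η k h), sum_unique _ (left_unique η k h)]
  · push Not at h
    apply Finset.sum_congr rfl
    intro ℓ _
    rw [if_neg, if_neg]
    · rintro ⟨⟨a, b⟩, _⟩; have := h ℓ a; omega
    · rintro ⟨⟨a, b⟩, _⟩; have := h ℓ a; omega

/-- ratio weight of incoming transitions -/
noncomputable def ww (g : ℕ → ℝ) (u : ℕ → ℕ → ℝ) (a b : ℕ) : ℝ :=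
  g (a + 1) * g (b - 1) / (g a * g b) * u (a + 1) (b - 1)

noncomputable def AA (L : ℕ) [NeZero L] (g : ℕ → ℝ) (u : ℕ → ℕ → ℝ) (q : ℝ) (η : ZMod L → ℕ)
    (k : ZMod L) : ℝ :=
  ∑ ℓ, ((if (ℓ ≠ k ∧ 1 ≤ η ℓ) ∧ RightClear L η k ℓ then (1 : ℝ) else 0) +
    q * (if (ℓ ≠ k ∧ 1 ≤ η ℓ) ∧ LeftClear L η k ℓ then (1 : ℝ) else 0)) * ww g u (η k) (η ℓ)

noncomputable def BB (L : ℕ) [NeZero L] (u : ℕ → ℕ → ℝ) (q : ℝ) (η : ZMod L → ℕ)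
    (k : ZMod L) : ℝ :=
  ∑ ℓ, ((if (ℓ ≠ k ∧ 1 ≤ η ℓ) ∧ LeftClear L η k ℓ then (1 : ℝ) else 0) +
    q * (if (ℓ ≠ k ∧ 1 ≤ η ℓ) ∧ RightClear L η k ℓ then (1 : ℝ) else 0)) * u (η ℓ) (η k)

lemma outflow_eq (L : ℕ) [NeZero L] (u : ℕ → ℕ → ℝ) (x : ZMod L → ℝ) (q : ℝ)
    (π : (ZMod L → ℕ) → ℝ) (η : ZMod L → ℕ) :
    outflow L u x q π η = π η * ∑ k, x k * BB L u q η k := by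
  unfold outflow BB hopRate
  rw [Finset.sum_comm, Finset.mul_sum]
  refine Finset.sum_congr rfl fun k _ => ?_
  rw [Finset.mul_sum, Finset.mul_sum]
  refine Finset.sum_congr rfl fun ℓ _ => ?_
  rw [left_iff_right η k ℓ, ← left_iff_right η ℓ k]
  simp only [and_assoc]
  split_ifs <;> ring

lemma prod_move_s9 (L : ℕ) [NeZero L] (g : ℕ → ℝ) (hg : ∀ n, 0 < g n) (x : ZMod L → ℝ)
    (hx : ∀ a, 0 < x a) (η : ZMod L → ℕ) (k ℓ : ZMod L) (hkl : ℓ ≠ k) (h1 : 1 ≤ η ℓ) :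
    (∏ a, (x a ^ (move L η ℓ k a) * g (move L η ℓ k a))) * x ℓ =
    (∏ a, (x a ^ (η a) * g (η a))) * (x k * (g (η k + 1) * g (η ℓ - 1) / (g (η k) * g (η ℓ)))) := by
  have hk : k ∈ Finset.univ.erase ℓ := by simp [hkl.symm]
  rw [← Finset.mul_prod_erase _ _ (Finset.mem_univ ℓ), ← Finset.mul_prod_erase _ _ hk,
    ← Finset.mul_prod_erase _ (fun a => x a ^ (η a) * g (η a)) (Finset.mem_univ ℓ),
    ← Finset.mul_prod_erase _ (fun a => x a ^ (η a) * g (η a)) hk]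
  have hr : ∏ a ∈ (Finset.univ.erase ℓ).erase k, (x a ^ (move L η ℓ k a) * g (move L η ℓ k a)) =
      ∏ a ∈ (Finset.univ.erase ℓ).erase k, (x a ^ (η a) * g (η a)) := by
    refine Finset.prod_congr rfl fun a ha => ?_
    simp only [Finset.mem_erase, Finset.mem_univ, and_true] at ha
    simp [move, ha.1, ha.2]
  rw [hr]
  have m1 : move L η ℓ k ℓ = η ℓ - 1 := by simp [move]
  have m2 : move L η ℓ k k = η k + 1 := by simp [move, hkl.symm]
  rw [m1, m2]
  obtain ⟨n, hn⟩ : ∃ n, η ℓ = n + 1 := ⟨η ℓ - 1, by omega⟩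
  rw [hn]
  simp only [Nat.add_sub_cancel]
  have := (hg (η k)).ne'
  have := (hg (n + 1)).ne'
  field_simp
  ring

lemma inflow_eq (L : ℕ) [NeZero L] (g : ℕ → ℝ) (hg : ∀ n, 0 < g n) (u : ℕ → ℕ → ℝ)
    (x : ZMod L → ℝ) (hx : ∀ a, 0 < x a) (q : ℝ) (η : ZMod L → ℕ) :
    inflow L u x q (fun η => ∏ a, (x a ^ (η a) * g (η a))) η =
      (∏ a, (x a ^ (η a) * g (η a))) * ∑ k, x k * AA L g u q η k := by
  unfold inflow AA hopRate
  rw [Finset.mul_sum]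
  refine Finset.sum_congr rfl fun k _ => ?_
  rw [Finset.mul_sum, Finset.mul_sum]
  refine Finset.sum_congr rfl fun ℓ _ => ?_
  rw [right_move, left_move]
  by_cases hkl : ℓ = k
  · subst hkl; simp
  by_cases h1 : 1 ≤ η ℓ
  · have hp := prod_move_s9 L g hg x hx η k ℓ hkl h1
    have m1 : move L η ℓ k ℓ = η ℓ - 1 := by simp [move]
    have m2 : move L η ℓ k k = η k + 1 := by simp [move, Ne.symm hkl]
    have hkl' : k ≠ ℓ := Ne.symm hkl
    simp only [m1, m2, h1, hkl, hkl', ne_eq, not_false_eq_true, true_and, if_true,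
      Nat.le_add_left, ww]
    have e : ∀ s t v : ℝ, (∏ a, (x a ^ (move L η ℓ k a) * g (move L η ℓ k a))) *
        (s * (x ℓ * v) + t * (x ℓ * v)) = ((∏ a, (x a ^ (move L η ℓ k a) * g (move L η ℓ k a))) * x ℓ) *
        ((s + t) * v) := by intros; ring
    have e1 : ∀ (P Q : Prop) (v : ℝ), ((if P then x ℓ * v else 0) + (if Q then q * (x ℓ * v) else 0)) =
      ((if P then 1 else 0) * (x ℓ * v) + (q * (if Q then 1 else 0)) * (x ℓ * v)) := by
      intros; split_ifs <;> ring
    rw [e1, e, hp]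
    ring
  · simp [h1]

lemma stat_iff (L : ℕ) [NeZero L] (g : ℕ → ℝ) (hg : ∀ n, 0 < g n) (u : ℕ → ℕ → ℝ)
    (x : ZMod L → ℝ) (hx : ∀ a, 0 < x a) (q : ℝ) (η : ZMod L → ℕ) :
    inflow L u x q (fun η => ∏ a, (x a ^ (η a) * g (η a))) η =
      outflow L u x q (fun η => ∏ a, (x a ^ (η a) * g (η a))) η ↔
    ∑ k, x k * AA L g u q η k = ∑ k, x k * BB L u q η k := by
  rw [inflow_eq L g hg u x hx, outflow_eq]
  have : (∏ a, (x a ^ (η a) * g (η a))) ≠ 0 :=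
    (Finset.prod_pos fun a _ => mul_pos (pow_pos (hx a) _) (hg _)).ne'
  exact mul_right_inj' this

lemma coeff_eq (g : ℕ → ℝ) (hg : ∀ n, 0 < g n) (u : ℕ → ℕ → ℝ) (q : ℝ)
    (h : FactorisedPALRMP u q (fun x n => x ^ n * g n)) (L : ℕ) [NeZero L] (hL : 2 ≤ L)
    (η : ZMod L → ℕ) (hη : 1 ≤ ∑ a, η a) (k : ZMod L) :
    AA L g u q η k = BB L u q η k := by
  have H := fun x hx => (stat_iff L g hg u x hx q η).1 (h.2 L _ hL hη x hx η rfl)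
  have H1 := H (fun _ => 1) (fun _ => one_pos)
  have H2 := H (fun a => 1 + if a = k then 1 else 0) (fun a => by positivity)
  simp only [add_mul, Finset.sum_add_distrib, ite_mul, zero_mul, Finset.sum_ite_eq',
    Finset.mem_univ, if_true, one_mul] at H1 H2
  linarith

lemma three_eq (g : ℕ → ℝ) (hg : ∀ n, 0 < g n) (u : ℕ → ℕ → ℝ) (q : ℝ)
    (h : FactorisedPALRMP u q (fun x n => x ^ n * g n)) (a b c : ℕ) (hb : 1 ≤ b) (hc : 1 ≤ c) :
    ww g u a b + q * ww g u a c = u c a + q * u b a := by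
  have H := coeff_eq g hg u q h 3 (by norm_num) (![a, b, c] : Fin 3 → ℕ)
    (by
      change 1 ≤ ∑ i : Fin 3, _
      rw [Fin.sum_univ_three]; simp; omega) (0 : Fin 3)
  have r1 : RightClear 3 (![a, b, c] : Fin 3 → ℕ) (0 : Fin 3) (1 : Fin 3) := by
    intro i h0 h1
    change i < 1 at h1
    omega
  have r2 : ¬ RightClear 3 (![a, b, c] : Fin 3 → ℕ) (0 : Fin 3) (2 : Fin 3) := by
    intro H
    have : b = 0 := H 1 (by norm_num) (by decide)
    omega
  have l2 : LeftClear 3 (![a, b, c] : Fin 3 → ℕ) (0 : Fin 3) (2 : Fin 3) := by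
    intro i h0 h1
    change i < 1 at h1
    omega
  have l1 : ¬ LeftClear 3 (![a, b, c] : Fin 3 → ℕ) (0 : Fin 3) (1 : Fin 3) := by
    intro H
    have : c = 0 := H 1 (by norm_num) (by decide)
    omega
  unfold AA BB at H
  change ∑ i : Fin 3, _ = ∑ i : Fin 3, _ at H
  rw [Fin.sum_univ_three, Fin.sum_univ_three] at H
  have n0 : ¬ @Ne (ZMod 3) (0 : Fin 3) (0 : Fin 3) := fun h => h rfl
  have n1 : @Ne (ZMod 3) (1 : Fin 3) (0 : Fin 3) :=
    fun h => absurd (congrArg Fin.val (show (1 : Fin 3) = 0 from h)) (by norm_num)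
  have n2 : @Ne (ZMod 3) (2 : Fin 3) (0 : Fin 3) :=
    fun h => absurd (congrArg Fin.val (show (2 : Fin 3) = 0 from h)) (by norm_num)
  have v0 : (![a, b, c] : Fin 3 → ℕ) 0 = a := rfl
  have v1 : (![a, b, c] : Fin 3 → ℕ) 1 = b := rfl
  have v2 : (![a, b, c] : Fin 3 → ℕ) 2 = c := rfl
  simp only [r1, r2, l1, l2, hb, hc, n0, n1, n2, v0, v1, v2, and_true, and_false, false_and,
    if_true, if_false] at H
  erw [if_pos n1, if_pos n2] at H
  linarith

/-- for every `g : ℕ → ℝ_{>0}` there is a rate function `u`, unique up to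
a positive constant factor, whose stationary distribution in the PALRMP is factorised
with one-point function `f (x, n) = x ^ n * g n`. -/
theorem exists_rate_arbitrary_onepoint
    (g : ℕ → ℝ) (hg : ∀ n, 0 < g n)
    (q : ℝ) (hq : 0 ≤ q) (hq1 : q ≠ 1) :
    ∃ u : ℕ → ℕ → ℝ, IsRate u ∧
      FactorisedPALRMP u q (fun x n => x ^ n * g n) ∧
      ∀ u' : ℕ → ℕ → ℝ, IsRate u' →
        FactorisedPALRMP u' q (fun x n => x ^ n * g n) →
        ∃ a : ℝ, 0 < a ∧ ∀ m n : ℕ, u' m n = a * u m n := by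
  refine ⟨fun m n => if m = 0 then 0 else g (n + 1) / g n, ⟨?_, ?_⟩, ⟨?_, ?_⟩, ?_⟩
  · intro m n hm
    have : m ≠ 0 := by omega
    simp only [this, if_false]
    exact div_pos (hg _) (hg _)
  · intro n; simp
  · intro x n hx
    exact mul_pos (pow_pos hx _) (hg _)
  · intro L N _ hL hN x hx η hη
    refine (stat_iff L g hg _ x hx q η).2 (Finset.sum_congr rfl fun k _ => ?_)
    congr 1
    have hA : AA L g (fun m n => if m = 0 then 0 else g (n + 1) / g n) q η k =
        ((∑ ℓ, if (ℓ ≠ k ∧ 1 ≤ η ℓ) ∧ RightClear L η k ℓ then (1 : ℝ) else 0) +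
        q * ∑ ℓ, if (ℓ ≠ k ∧ 1 ≤ η ℓ) ∧ LeftClear L η k ℓ then (1 : ℝ) else 0) *
        (g (η k + 1) / g (η k)) := by
      unfold AA
      rw [Finset.mul_sum, ← Finset.sum_add_distrib, Finset.sum_mul]
      refine Finset.sum_congr rfl fun ℓ _ => ?_
      by_cases h1 : 1 ≤ η ℓ
      · congr 1
        obtain ⟨n, hn⟩ : ∃ n, η ℓ = n + 1 := ⟨η ℓ - 1, by omega⟩
        have := (hg n).ne'
        have := (hg (n + 1)).ne'
        have := (hg (η k)).ne'
        simp only [ww, hn, Nat.add_sub_cancel, Nat.succ_ne_zero, if_false]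
        field_simp
      · simp [h1]
    have hB : BB L (fun m n => if m = 0 then 0 else g (n + 1) / g n) q η k =
        ((∑ ℓ, if (ℓ ≠ k ∧ 1 ≤ η ℓ) ∧ LeftClear L η k ℓ then (1 : ℝ) else 0) +
        q * ∑ ℓ, if (ℓ ≠ k ∧ 1 ≤ η ℓ) ∧ RightClear L η k ℓ then (1 : ℝ) else 0) *
        (g (η k + 1) / g (η k)) := by
      unfold BB
      rw [Finset.mul_sum, ← Finset.sum_add_distrib, Finset.sum_mul]
      refine Finset.sum_congr rfl fun ℓ _ => ?_
      by_cases h1 : 1 ≤ η ℓ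
      · congr 1
        have : η ℓ ≠ 0 := by omega
        simp [this]
      · simp [h1]
    rw [hA, hB, count_eq]
  · intro u' hu' hf
    have key : ∀ a b c : ℕ, 1 ≤ b → 1 ≤ c → ww g u' a b = u' c a := by
      intro a b c hb hc
      have e1 := three_eq g hg u' q hf a b c hb hc
      have e2 := three_eq g hg u' q hf a c b hc hb
      have h3 : (1 - q) * ((1 + q) * (ww g u' a b - u' c a)) = 0 := by
        linear_combination e1 - q * e2
      have h4 : (1 - q) ≠ 0 := fun h => hq1 (by linarith)
      have h5 : (1 + q) ≠ 0 := by positivity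
      have := (mul_eq_zero.1 ((mul_eq_zero.1 h3).resolve_left h4)).resolve_left h5
      linarith
    refine ⟨u' 1 0 * g 0 / g 1, div_pos (mul_pos (hu'.1 1 0 le_rfl) (hg 0)) (hg 1), ?_⟩
    intro m n
    by_cases hm : m = 0
    · subst hm; simp [hu'.2 n]
    · have e1 := key n 1 m le_rfl (by omega)
      have e2 := key 0 1 (n + 1) le_rfl (by omega)
      have g0 := (hg 0).ne'
      have g1 := (hg 1).ne'
      have gn := (hg n).ne'
      simp only [ww, Nat.sub_self, zero_add] at e1 e2
      simp only [hm, if_false]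
      rw [← e1, ← e2]
      field_simp

end LRMP
end

section
/- Let S be a set, (G,·) a group with identity e, M ∈ ℕ, and F : S×S → G. Suppose that for every L ≥ M and all s_1, s_2, …, s_L ∈ S (with the convention s_{L+1} = s_1), the ordered product ∏_{ℓ=1}^{L} F(s_ℓ, s_{ℓ+1}) equals e. Then for all p, q, r ∈ S, F(p,q) = F(p,r)·F(q,r)^{-1}. -/
/-- if every cyclic ordered product `F (s 1, s 2) ⋯ F (s L, s 1)` of length
`L ≥ M` is the identity, then `F (p, q) = F (p, r) * (F (q, r))⁻¹` for all `p q r`. -/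
theorem circular_prod_group {S G : Type*} [Group G] (M : ℕ) (F : S → S → G)
    (h : ∀ L : ℕ, M ≤ L → ∀ s : ℕ → S,
      ((List.range L).map fun i => F (s i) (s ((i + 1) % L))).prod = 1) :
    ∀ p q r : S, F p q = F p r * (F q r)⁻¹ := by
  have h1 : ∀ p, F p p = 1 := by
    intro p
    have a := h M le_rfl (fun _ => p)
    have b := h (M + 1) (Nat.le_succ M) (fun _ => p)
    simp only [List.map_const', List.length_range, List.prod_replicate] at a b
    rwa [pow_succ, a, one_mul] at b
  have h3 : ∀ p q r, F p q * (F q r * F r p) = 1 := by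
    intro p q r
    have a := h (M + 4) (by omega) (fun i => if i = 1 then q else if i = 2 then r else p)
    have e : List.range (M + 4) = 0 :: 1 :: 2 :: (List.range (M + 1)).map (· + 3) := by
      rw [show M + 4 = 3 + (M + 1) by omega, List.range_add]
      simp [List.range_succ, add_comm]
    rw [e] at a
    have t : (((List.range (M + 1)).map (· + 3)).map fun i =>
        F (if i = 1 then q else if i = 2 then r else p)
          (if (i + 1) % (M + 4) = 1 then q else if (i + 1) % (M + 4) = 2 then r else p)).prod
        = 1 := by
      apply List.prod_eq_one
      intro x hx
      simp only [List.mem_map, List.mem_range] at hx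
      obtain ⟨i, ⟨j, hj, rfl⟩, rfl⟩ := hx
      have c : (j + 3 + 1) % (M + 4) ≠ 1 ∧ (j + 3 + 1) % (M + 4) ≠ 2 := by
        rcases Nat.lt_or_ge j M with hl | hl
        · rw [Nat.mod_eq_of_lt (by omega)]; omega
        · have : j = M := by omega
          subst this
          rw [show j + 3 + 1 = j + 4 by omega, Nat.mod_self]; omega
      rw [if_neg c.1, if_neg c.2, if_neg (by omega), if_neg (by omega), h1]
    rw [List.map_cons, List.map_cons, List.map_cons, List.prod_cons, List.prod_cons,
      List.prod_cons, t, Nat.mod_eq_of_lt (by omega), Nat.mod_eq_of_lt (by omega),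
      Nat.mod_eq_of_lt (by omega)] at a
    simpa using a
  intro p q r
  have a := h3 p q r
  have b := h3 p r r
  rw [h1, one_mul] at b
  rw [← mul_assoc, ← b] at a
  rw [← mul_right_cancel a, mul_inv_cancel_right]
end

section
/- Let b : ℕ → ℝ∖{0} and c : ℕ → ℝ with c(1) = 0. Then for every n ≥ 1, ∑_{ℓ=0}^{n−1} (c(1+ℓ) − c(n−ℓ))·∏_{k=1}^{ℓ} (b(k)/b(n−k)) = 0. -/
theorem prod_aux (b : ℕ → ℝ) (hb : ∀ n, b n ≠ 0) (n : ℕ) (l : ℕ) : ∀ m, n = m + l + 1 →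
    (∏ k ∈ Finset.Icc 1 l, b k / b (n - k)) * (∏ k ∈ Finset.Icc 1 (n - 1), b k)
      = (∏ k ∈ Finset.Icc 1 l, b k) * ∏ k ∈ Finset.Icc 1 m, b k := by
  induction l with
  | zero =>
    intro m hm
    subst hm
    simp
  | succ l ih =>
    intro m hm
    have h := ih (m + 1) (by omega)
    have e : n - (l + 1) = m + 1 := by omega
    rw [Finset.prod_Icc_succ_top (by omega)] at h
    rw [Finset.prod_Icc_succ_top (by omega), Finset.prod_Icc_succ_top (by omega), e]
    have := hb (m + 1)
    field_simp
    linear_combination b (l + 1) * h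

/-- for `b : ℕ → ℝ∖{0}` and `c : ℕ → ℝ` with `c 1 = 0`, for every `n ≥ 1`,
`∑_{ℓ=0}^{n-1} (c (1+ℓ) - c (n-ℓ)) * ∏_{k=1}^{ℓ} (b k / b (n-k)) = 0`. -/
theorem circular_c_sum_vanishes (b : ℕ → ℝ) (hb : ∀ n, b n ≠ 0)
    (c : ℕ → ℝ) (hc : c 1 = 0) (n : ℕ) (hn : 1 ≤ n) :
    ∑ ℓ ∈ Finset.range n,
      (c (1 + ℓ) - c (n - ℓ)) * ∏ k ∈ Finset.Icc 1 ℓ, b k / b (n - k) = 0 := by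
  have key : ∀ l ∈ Finset.range n, (∏ k ∈ Finset.Icc 1 (n - 1 - l), b k / b (n - k))
      = ∏ k ∈ Finset.Icc 1 l, b k / b (n - k) := by
    intro l hl
    have hl := Finset.mem_range.1 hl
    have h1 := prod_aux b hb n l (n - 1 - l) (by omega)
    have h2 := prod_aux b hb n (n - 1 - l) l (by omega)
    have h0 : (∏ k ∈ Finset.Icc 1 (n - 1), b k) ≠ 0 := Finset.prod_ne_zero_iff.2 fun k _ => hb k
    apply mul_right_cancel₀ h0
    rw [h1, h2, mul_comm]
  have h := Finset.sum_range_reflect (fun l =>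
    (c (1 + l) - c (n - l)) * ∏ k ∈ Finset.Icc 1 l, b k / b (n - k)) n
  have h' : ∑ l ∈ Finset.range n, (c (1 + (n - 1 - l)) - c (n - (n - 1 - l))) *
      ∏ k ∈ Finset.Icc 1 (n - 1 - l), b k / b (n - k) = -∑ l ∈ Finset.range n,
      (c (1 + l) - c (n - l)) * ∏ k ∈ Finset.Icc 1 l, b k / b (n - k) := by
    rw [← Finset.sum_neg_distrib]
    refine Finset.sum_congr rfl fun l hl => ?_
    rw [key l hl]
    have hl := Finset.mem_range.1 hl
    rw [show 1 + (n - 1 - l) = n - l by omega, show n - (n - 1 - l) = 1 + l by omega]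
    ring
  linarith
end
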